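/- For all integers k >= 0, j >= 0, m >= 1, setting n = 2m + kj, and for all rationals t_1, ..., t_m: \sum_{P \in P_{n,k}^{m,j}} \prod_{i=1}^{m} t_i^{\alpha_i(P)} = (1/(m+1)) * C(m+j, m) * \sum_{r=0}^{m} C(m+j+1, r) * (r!/m!) * B_{m,r}(1!t_1, 2!t_2, ...). -/

import Mathlib

open Finset

inductive Step : Type
  | u | d | h
deriving DecidableEq

/-- Lengths of maximal blocks of letters with `wt s ≠ none`, weighted by `wt`. -/
def runs (wt : Step → Option ℕ) : List Step → List ℕ
  | [] => []
  | s :: l =>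
    match wt s, runs wt l with
    | none, r => r
    | some n, r =>
      match l with
      | [] => [n]
      | s' :: _ =>
        match wt s' with
        | none => n :: r
        | some _ =>
          match r with
          | a :: rest => (n + a) :: rest
          | [] => [n]

def uRuns : List Step → List ℕ :=
  runs (fun s => match s with | Step.u => some 1 | _ => none)

def uhRuns (k : ℕ) : List Step → List ℕ :=
  runs (fun s => match s with | Step.u => some 1 | Step.h => some k | Step.d => none)

def alpha (i : ℕ) (w : List Step) : ℕ := (uRuns w).count i

def beta (i : ℕ) (w : List Step) : ℕ := (uRuns w).tail.count i

def IsNonneg (w : List Step) : Prop :=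
  ∀ i : ℕ, (w.take i).count Step.d ≤ (w.take i).count Step.u

def pathSet (m j : ℕ) : Set (List Step) :=
  {w | w.count Step.u = m ∧ w.count Step.d = m ∧ w.count Step.h = j ∧ IsNonneg w}

/-- no horizontal step lies on the x-axis -/
def NoLowH (w : List Step) : Prop :=
  ∀ (i : ℕ) (hi : i < w.length), w[i]'hi = Step.h →
    (w.take i).count Step.u ≠ (w.take i).count Step.d

def qSet (m j : ℕ) : Set (List Step) :=
  {w | w ∈ pathSet m j ∧ NoLowH w}

/-- normalized partial Bell polynomial (r!/m!) B_{m,r}(1!t₁,2!t₂,…) -/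
def bellNorm (m r : ℕ) (t : ℕ → ℚ) : ℚ :=
  ∑ f : Fin m → Fin (m + 1),
    if (∑ i : Fin m, (f i : ℕ)) = r ∧ (∑ i : Fin m, ((i : ℕ) + 1) * (f i : ℕ)) = m then
      (r.factorial : ℚ) / (∏ i : Fin m, ((f i : ℕ).factorial : ℚ)) * ∏ i : Fin m, t ((i : ℕ) + 1) ^ (f i : ℕ)
    else 0

/-- normalized potential polynomial  P_p^{(lam)}(1!t₁,2!t₂,…)/p! -/
def potential (lam p : ℕ) (t : ℕ → ℚ) : ℚ :=
  ∑ r ∈ Finset.range (p + 1), (Nat.choose lam r : ℚ) * bellNorm p r t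

/-!
Read a path backwards: each suffix of a path that ends on the axis has at least as many `d`s as
`u`s. Let `W N c` be the generating function of the words with this property that have `N` letters
other than `u` and `c` letters other than `d`, where `y` marks the letters `h`. Cutting such a word
after its first letter other than `u` gives `W (N + 1) c = [x ^ c] ψ * ∑ W N i * x ^ i` for
`c ≤ N + 1`, with `ψ = (1 + ∑ t i * x ^ i) * (1 + y * x)`. As `W N (N + 1) = 0`, the weighted ballot
formula `(N + 1) * W N c = (N + 1 - c) * [x ^ c] ψ ^ (N + 1)` follows by induction on `N`, because
`(N + 1) * ψ * D (ψ ^ N) = N * D (ψ ^ (N + 1))` for the derivative `D`. Paths with `m` up-steps and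
`j` horizontal steps are the case `N = c = m + j`, and the coefficient of `y ^ j` splits the
right-hand side into `C(m + j + 1, j)` times the coefficient of `x ^ m` in
`(1 + ∑ t i * x ^ i) ^ (m + j + 1)`.
-/

section PowerSeries

open PowerSeries

variable {R : Type*} [CommSemiring R]

theorem coeff_X_mul_derivative (f : R⟦X⟧) (n : ℕ) :
    coeff n (X * derivative R f) = n * coeff n f := by
  cases n with
  | zero => simp
  | succ n => rw [coeff_succ_X_mul, coeff_derivative, mul_comm, Nat.cast_succ]

theorem add_one_mul_mul_derivative_pow (f : R⟦X⟧) (n : ℕ) :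
    (n + 1) * (f * derivative R (f ^ n)) = n * derivative R (f ^ (n + 1)) := by
  cases n with
  | zero => simp
  | succ n =>
    simp only [derivative_pow, Nat.add_sub_cancel]
    push_cast
    ring

theorem add_one_mul_sum_antidiagonal_coeff_pow (f : R⟦X⟧) (n c : ℕ) :
    ((n : R) + 1) * ∑ p ∈ antidiagonal c, coeff p.1 f * (p.2 * coeff p.2 (f ^ n)) =
      n * (c * coeff c (f ^ (n + 1))) := by
  have h : ((n : R⟦X⟧) + 1) * (f * (X * derivative R (f ^ n))) =
      (n : R⟦X⟧) * (X * derivative R (f ^ (n + 1))) := by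
    rw [mul_left_comm f, mul_left_comm _ X, add_one_mul_mul_derivative_pow, mul_left_comm]
  have hc := congrArg (coeff c) h
  rw [← Nat.cast_succ, ← map_natCast (C (R := R)), ← map_natCast (C (R := R)), coeff_C_mul,
    coeff_C_mul, coeff_X_mul_derivative, coeff_mul] at hc
  simpa only [coeff_X_mul_derivative, Nat.cast_succ] using hc

theorem ballot_formula {K : Type*} [CommRing K] [IsDomain K] [CharZero K] (ψ : K⟦X⟧) (W : ℕ → ℕ → K)
    (zero_zero : W 0 0 = coeff 0 ψ) (above : ∀ N, W N (N + 1) = 0)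
    (step : ∀ N, ∀ c ≤ N + 1, W (N + 1) c = coeff c (ψ * mk (W N))) (N c : ℕ) (hc : c ≤ N + 1) :
    ((N : K) + 1) * W N c = (N + 1 - c) * coeff c (ψ ^ (N + 1)) := by
  induction N generalizing c with
  | zero =>
    obtain rfl | rfl : c = 0 ∨ c = 1 := by omega
    · simp [zero_zero]
    · simp [above]
  | succ N ih =>
    obtain rfl | hc := hc.eq_or_lt
    · simp [above]
    have first_step : ((N : K) + 1) * W (N + 1) c = (N + 1) * coeff c (ψ ^ (N + 2)) -
        ∑ p ∈ antidiagonal c, coeff p.1 ψ * (p.2 * coeff p.2 (ψ ^ (N + 1))) := by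
      rw [step N c (by omega), pow_succ' ψ (N + 1), coeff_mul, coeff_mul, mul_sum, mul_sum,
        ← sum_sub_distrib]
      refine sum_congr rfl fun p hp ↦ ?_
      have hp_le : p.2 ≤ N + 1 := by
        have := mem_antidiagonal.1 hp
        omega
      rw [coeff_mk]
      linear_combination coeff p.1 ψ * ih p.2 hp_le
    have log_derivative := add_one_mul_sum_antidiagonal_coeff_pow ψ (N + 1) c
    apply mul_left_cancel₀ (Nat.cast_add_one_ne_zero N : (N : K) + 1 ≠ 0)
    push_cast at log_derivative ⊢
    linear_combination ((N : K) + 2) * first_step - log_derivative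

theorem coeff_sum_C_mul_X_pow_pow {ι : Type*} [DecidableEq ι] (s : Finset ι)
    (a : ι → R) (e : ι → ℕ) (r n : ℕ) :
    ((∑ i ∈ s, Polynomial.C (a i) * Polynomial.X ^ e i) ^ r).coeff n =
      ∑ k ∈ piAntidiag s r with ∑ i ∈ s, e i * k i = n,
        (Nat.multinomial s k : R) * ∏ i ∈ s, a i ^ k i := by
  rw [sum_pow_eq_sum_piAntidiag, Polynomial.finsetSum_coeff, sum_filter]
  refine sum_congr rfl fun k _ ↦ ?_
  have h : (Nat.multinomial s k : Polynomial R) *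
      ∏ i ∈ s, (Polynomial.C (a i) * Polynomial.X ^ e i) ^ k i =
      Polynomial.C (Nat.multinomial s k * ∏ i ∈ s, a i ^ k i) *
        Polynomial.X ^ ∑ i ∈ s, e i * k i := by
    simp only [mul_pow, prod_mul_distrib, ← pow_mul, prod_pow_eq_pow_sum, map_mul, map_prod,
      map_pow, map_natCast, mul_assoc]
  rw [h, Polynomial.coeff_C_mul_X_pow]
  exact if_congr eq_comm rfl rfl

theorem coeff_pow_of_constantCoeff_eq_zero {f : R⟦X⟧}
    (hf : constantCoeff f = 0) (n r : ℕ) :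
    coeff n (f ^ r) =
      ∑ k ∈ piAntidiag (univ : Finset (Fin n)) r with ∑ i : Fin n, (i + 1 : ℕ) * k i = n,
        (Nat.multinomial univ k : R) * ∏ i : Fin n, coeff (i + 1 : ℕ) f ^ k i := by
  have htrunc : trunc (n + 1) f =
      ∑ i : Fin n, Polynomial.C (coeff (i + 1 : ℕ) f) * Polynomial.X ^ (i + 1 : ℕ) := by
    rw [← Finset.sum_range (fun i ↦ Polynomial.C (coeff (i + 1) f) * Polynomial.X ^ (i + 1))]
    ext (_ | i) <;> simp [coeff_trunc, Polynomial.coeff_X_pow, hf]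
  have hcoeff : coeff n (f ^ r) = (trunc (n + 1) f ^ r).coeff n := by
    have := congrArg (Polynomial.coeff · n) (trunc_trunc_pow f (n + 1) r)
    simpa only [coeff_trunc, n.lt_succ_self, if_true, ← Polynomial.coe_pow,
      Polynomial.coeff_coe] using this.symm
  rw [hcoeff, htrunc, coeff_sum_C_mul_X_pow_pow]

theorem coeff_one_add_pow_of_constantCoeff_eq_zero {f : R⟦X⟧}
    (hf : constantCoeff f = 0) (n N : ℕ) :
    coeff n ((1 + f) ^ N) = ∑ r ∈ range (n + 1), (N.choose r : R) * coeff n (f ^ r) := by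
  have expand : coeff n ((1 + f) ^ N) = ∑ r ∈ range (N + 1), N.choose r * coeff n (f ^ r) := by
    rw [add_comm, add_pow, map_sum]
    refine sum_congr rfl fun r _ ↦ ?_
    rw [one_pow, mul_one, mul_comm, ← map_natCast (C (R := R)), coeff_C_mul]
  have vanish_of_lt : ∀ r, N + 1 ≤ r → (N.choose r : R) * coeff n (f ^ r) = 0 := fun r hr ↦ by
    rw [Nat.choose_eq_zero_of_lt hr, Nat.cast_zero, zero_mul]
  have vanish_of_order : ∀ r, n + 1 ≤ r → (N.choose r : R) * coeff n (f ^ r) = 0 := fun r hr ↦ by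
    rw [X_pow_dvd_iff.1 (pow_dvd_pow_of_dvd (X_dvd_iff.2 hf) r) n hr, mul_zero]
  rw [expand, ← eventually_constant_sum vanish_of_lt (le_max_left _ (n + 1)),
    ← eventually_constant_sum vanish_of_order (le_max_right (N + 1) _)]

theorem coeff_one_add_C_mul_X_pow (y : R) (N n : ℕ) :
    coeff n ((1 + C y * X) ^ N) = N.choose n * y ^ n := by
  rw [coeff_one_add_pow_of_constantCoeff_eq_zero (by simp), sum_range_succ,
    sum_eq_zero fun r hr ↦ ?_]
  · simp [mul_pow, ← map_pow, coeff_C_mul]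
  · rw [mul_pow, ← map_pow, coeff_C_mul, coeff_X_pow, if_neg (mem_range.1 hr).ne', mul_zero,
      mul_zero]

theorem coeff_coeff_map_C_mul_one_add_C_X_mul_X_pow (f : R⟦X⟧) (N m j : ℕ) :
    (coeff (m + j) ((map Polynomial.C f * (1 + C Polynomial.X * X)) ^ N)).coeff j =
      N.choose j * coeff m (f ^ N) := by
  rw [mul_pow, ← map_pow, coeff_mul, Polynomial.finsetSum_coeff,
    sum_eq_single_of_mem (m, j) (mem_antidiagonal.2 rfl)]
  · rw [coeff_map, coeff_one_add_C_mul_X_pow, Polynomial.coeff_C_mul, Polynomial.coeff_natCast_mul,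
      Polynomial.coeff_X_pow_self, mul_one, mul_comm]
  · rintro ⟨a, b⟩ hab hne
    have hjb : j ≠ b := by
      rintro rfl
      exact hne (Prod.ext (Nat.add_right_cancel (mem_antidiagonal.1 hab)) rfl)
    rw [coeff_map, coeff_one_add_C_mul_X_pow, Polynomial.coeff_C_mul, Polynomial.coeff_natCast_mul,
      Polynomial.coeff_X_pow, if_neg hjb, mul_zero, mul_zero]

end PowerSeries

section SegmentSeries

open PowerSeries

variable {R S : Type*} [Semiring R] [Semiring S]

/-- The generating function `1 + ∑ tᵢ Xⁱ` of a possibly empty segment, where a nonempty segment of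
length `i` has weight `t i`; the value `t 0` is ignored. -/
noncomputable def segmentSeries (t : ℕ → R) : R⟦X⟧ :=
  mk (Function.update t 0 1)

theorem map_segmentSeries (φ : R →+* S) (t : ℕ → R) :
    map φ (segmentSeries t) = segmentSeries (φ ∘ t) := by
  ext n
  cases n <;> simp [segmentSeries]

theorem bellNorm_eq_sum_multinomial (m r : ℕ) (t : ℕ → ℚ) :
    bellNorm m r t =
      ∑ k ∈ piAntidiag (univ : Finset (Fin m)) r with ∑ i : Fin m, (i + 1 : ℕ) * k i = m,
        (Nat.multinomial univ k : ℚ) * ∏ i : Fin m, t (i + 1) ^ k i := by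
  rw [bellNorm, ← sum_filter]
  refine sum_bij (fun f _ i ↦ (f i : ℕ)) ?_ ?_ ?_ ?_
  · intro f hf
    simpa using hf
  · intro f _ g _ hfg
    exact funext fun i ↦ Fin.ext (congrFun hfg i)
  · intro k hk
    obtain ⟨hk_sum, hk_weight⟩ : ∑ i, k i = r ∧ ∑ i : Fin m, (i + 1 : ℕ) * k i = m := by
      simpa using hk
    have hk_lt (i : Fin m) : k i < m + 1 := by
      refine Nat.lt_succ_of_le (le_trans ?_ hk_weight.le)
      exact (Nat.le_mul_of_pos_left _ i.val.succ_pos).trans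
        (single_le_sum (f := fun i : Fin m ↦ (i + 1 : ℕ) * k i) (fun _ _ ↦ Nat.zero_le _)
          (mem_univ i))
    exact ⟨fun i ↦ ⟨k i, hk_lt i⟩, by simpa using ⟨hk_sum, hk_weight⟩, rfl⟩
  · intro f hf
    have hr : ∑ i, (f i : ℕ) = r := (mem_filter.1 hf).2.1
    have hspec := Nat.multinomial_spec univ fun i ↦ (f i : ℕ)
    rw [hr] at hspec
    congr 1
    rw [div_eq_iff (prod_ne_zero_iff.2 fun i _ ↦ Nat.cast_ne_zero.2 (Nat.factorial_ne_zero _)),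
      mul_comm]
    exact_mod_cast hspec.symm

theorem coeff_segmentSeries_pow (t : ℕ → ℚ) (p lam : ℕ) :
    coeff p (segmentSeries t ^ lam) = potential lam p t := by
  have hconst : constantCoeff (segmentSeries t - 1) = 0 := by
    rw [← coeff_zero_eq_constantCoeff_apply]
    simp [segmentSeries]
  have hbell (r : ℕ) : coeff p ((segmentSeries t - 1) ^ r) = bellNorm p r t := by
    rw [coeff_pow_of_constantCoeff_eq_zero hconst, bellNorm_eq_sum_multinomial]
    simp [segmentSeries, coeff_one]
  rw [← add_sub_cancel 1 (segmentSeries t), coeff_one_add_pow_of_constantCoeff_eq_zero hconst]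
  simp only [hbell, potential]

end SegmentSeries

section Segments

theorem uRuns_cons_of_ne_u {s : Step} (hs : s ≠ Step.u) (w : List Step) :
    uRuns (s :: w) = uRuns w := by
  cases s <;> simp_all [uRuns, runs]

theorem uRuns_u_cons_cons_of_ne_u {s : Step} (hs : s ≠ Step.u) (w : List Step) :
    uRuns (Step.u :: s :: w) = 1 :: uRuns w := by
  cases s <;> simp_all [uRuns, runs]

theorem uRuns_u_cons_u_cons {w : List Step} {a : ℕ} {r : List ℕ}
    (h : uRuns (Step.u :: w) = a :: r) : uRuns (Step.u :: Step.u :: w) = (1 + a) :: r := by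
  unfold uRuns at *
  rw [runs, h]

theorem uRuns_u_cons (w : List Step) :
    uRuns (Step.u :: w) = 1 :: uRuns w ∨
      ∃ a r, uRuns w = a :: r ∧ uRuns (Step.u :: w) = (1 + a) :: r := by
  match w with
  | [] => simp [uRuns, runs]
  | Step.u :: w =>
    cases h : uRuns (Step.u :: w) with
    | nil =>
      left
      unfold uRuns at *
      rw [runs, h]
    | cons a r => exact .inr ⟨a, r, rfl, uRuns_u_cons_u_cons h⟩
  | Step.d :: w => simp [uRuns, runs]
  | Step.h :: w => simp [uRuns, runs]

theorem uRuns_replicate_succ_append {s : Step} (hs : s ≠ Step.u) (a : ℕ) (w : List Step) :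
    uRuns (List.replicate (a + 1) Step.u ++ s :: w) = (a + 1) :: uRuns w := by
  induction a with
  | zero => exact uRuns_u_cons_cons_of_ne_u hs w
  | succ a ih =>
    rw [List.replicate_succ, List.replicate_succ, add_comm (a + 1)]
    exact uRuns_u_cons_u_cons ih

theorem sum_uRuns (w : List Step) : (uRuns w).sum = w.count Step.u := by
  induction w with
  | nil => rfl
  | cons s w ih =>
    cases s with
    | u =>
      obtain h | ⟨a, r, hw, h⟩ := uRuns_u_cons w
      · simp [h, ih, add_comm]
      · simp [h, ← ih, hw]
        omega
    | d | h => simpa [uRuns_cons_of_ne_u] using ih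

theorem one_le_of_mem_uRuns {w : List Step} {a : ℕ} (ha : a ∈ uRuns w) : 1 ≤ a := by
  induction w generalizing a with
  | nil => simp [uRuns, runs] at ha
  | cons s w ih =>
    cases s with
    | u =>
      obtain h | ⟨b, r, hw, h⟩ := uRuns_u_cons w <;> rw [h, List.mem_cons] at ha
      · exact ha.elim (·.ge) ih
      · obtain rfl | ha := ha
        · omega
        · exact ih (hw ▸ List.mem_cons_of_mem b ha)
    | d | h => exact ih (by simpa [uRuns_cons_of_ne_u] using ha)

variable {R : Type*} [CommSemiring R]

/-- The product of the weights `t i` over the `u`-segments of a word, `i` being the length of the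
segment. -/
def segmentWeight (t : ℕ → R) (w : List Step) : R := ((uRuns w).map t).prod

theorem map_segmentWeight {S : Type*} [CommSemiring S] (φ : R →+* S) (t : ℕ → R) (w : List Step) :
    φ (segmentWeight t w) = segmentWeight (φ ∘ t) w := by
  simp [segmentWeight, map_list_prod]

theorem segmentWeight_replicate_append (t : ℕ → R) {s : Step} (hs : s ≠ Step.u) (a : ℕ)
    (w : List Step) :
    segmentWeight t (List.replicate a Step.u ++ s :: w) =
      Function.update t 0 1 a * segmentWeight t w := by
  cases a <;> simp [segmentWeight, uRuns_cons_of_ne_u hs, uRuns_replicate_succ_append hs]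

theorem prod_pow_alpha (t : ℕ → R) (w : List Step) :
    ∏ i ∈ Icc 1 (w.count Step.u), t i ^ alpha i w = segmentWeight t w := by
  rw [segmentWeight, prod_list_map_count]
  symm
  refine prod_subset (fun i hi ↦ ?_) fun i _ hi ↦ ?_
  · rw [List.mem_toFinset] at hi
    exact mem_Icc.2 ⟨one_le_of_mem_uRuns hi, sum_uRuns w ▸ List.le_sum_of_mem hi⟩
  · rw [List.count_eq_zero_of_not_mem (mt List.mem_toFinset.2 hi), pow_zero]

end Segments

section BallotWords

open PowerSeries

/-- The words all of whose suffixes have at least as many `d`s as `u`s: the paths that end on the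
`x`-axis and never go below it, starting at an arbitrary height. -/
def IsBallot (w : List Step) : Prop :=
  ∀ v, v <:+ w → v.count Step.u ≤ v.count Step.d

theorem isBallot_nil : IsBallot [] := fun v hv ↦ by simp [List.suffix_nil.1 hv]

theorem isBallot_cons (s : Step) (w : List Step) :
    IsBallot (s :: w) ↔ (s :: w).count Step.u ≤ (s :: w).count Step.d ∧ IsBallot w := by
  simp [IsBallot, List.suffix_cons_iff, or_imp, forall_and]

theorem isNonneg_iff_isBallot {w : List Step} (hw : w.count Step.u = w.count Step.d) :
    IsNonneg w ↔ IsBallot w := by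
  have hsplit (s : Step) (i : ℕ) : (w.take i).count s + (w.drop i).count s = w.count s := by
    rw [← List.count_append, List.take_append_drop]
  constructor
  · intro h v hv
    obtain ⟨i, rfl⟩ : ∃ i, v = w.drop i := ⟨_, List.suffix_iff_eq_drop.1 hv⟩
    have := h i
    have := hsplit Step.u i
    have := hsplit Step.d i
    omega
  · intro h i
    have := h _ (List.drop_suffix i w)
    have := hsplit Step.u i
    have := hsplit Step.d i
    omega

/-- The ballot words with `N` letters other than `u` and `c` letters other than `d`; as paths, they
start at height `N - c`. -/
def ballotWords : ℕ → ℕ → Finset (List Step)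
  | 0, 0 => {[]}
  | 0, _ + 1 => ∅
  | N + 1, 0 => (ballotWords N 0).image (Step.d :: ·)
  | N + 1, c + 1 =>
    (ballotWords N (c + 1)).image (Step.d :: ·) ∪ (ballotWords N c).image (Step.h :: ·) ∪
      if c ≤ N then (ballotWords (N + 1) c).image (Step.u :: ·) else ∅

theorem nil_mem_ballotWords {N c : ℕ} : [] ∈ ballotWords N c ↔ N = 0 ∧ c = 0 := by
  cases N <;> cases c <;> simp only [ballotWords] <;> grind

theorem d_cons_mem_ballotWords {N c : ℕ} {w : List Step} :
    Step.d :: w ∈ ballotWords N c ↔ ∃ N', N = N' + 1 ∧ w ∈ ballotWords N' c := by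
  cases N <;> cases c <;> simp only [ballotWords] <;> grind

theorem h_cons_mem_ballotWords {N c : ℕ} {w : List Step} :
    Step.h :: w ∈ ballotWords N c ↔ ∃ N' c', N = N' + 1 ∧ c = c' + 1 ∧ w ∈ ballotWords N' c' := by
  cases N <;> cases c <;> simp only [ballotWords] <;> grind

theorem u_cons_mem_ballotWords {N c : ℕ} {w : List Step} :
    Step.u :: w ∈ ballotWords N c ↔ ∃ c', c = c' + 1 ∧ c ≤ N ∧ w ∈ ballotWords N c' := by
  cases N <;> cases c <;> simp only [ballotWords] <;> grind

theorem mem_ballotWords {N c : ℕ} {w : List Step} :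
    w ∈ ballotWords N c ↔ IsBallot w ∧ w.count Step.d + w.count Step.h = N ∧
      w.count Step.u + w.count Step.h = c := by
  induction w generalizing N c with
  | nil => simp [nil_mem_ballotWords, isBallot_nil, eq_comm]
  | cons s w ih =>
    have hw : IsBallot w → w.count Step.u ≤ w.count Step.d := fun h ↦ h w List.suffix_rfl
    cases s with
    | u =>
      simp only [u_cons_mem_ballotWords, isBallot_cons, ih]
      constructor
      · rintro ⟨c', rfl, hc, hballot, hN, hc'⟩
        grind
      · rintro ⟨⟨_, hballot⟩, hN, hc⟩
        exact ⟨w.count Step.u + w.count Step.h, by grind⟩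
    | d =>
      simp only [d_cons_mem_ballotWords, isBallot_cons, ih]
      grind
    | h =>
      simp only [h_cons_mem_ballotWords, isBallot_cons, ih]
      grind

theorem ballotWords_eq_empty {N c : ℕ} (h : N < c) : ballotWords N c = ∅ := by
  refine eq_empty_of_forall_notMem fun w hw ↦ ?_
  obtain ⟨hballot, hN, hc⟩ := mem_ballotWords.1 hw
  have := hballot w List.suffix_rfl
  omega

theorem sum_ballotWords_succ_zero {M : Type*} [AddCommMonoid M] (N : ℕ) (f : List Step → M) :
    ∑ w ∈ ballotWords (N + 1) 0, f w = ∑ w ∈ ballotWords N 0, f (Step.d :: w) := by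
  rw [ballotWords, sum_image (List.cons_injective.injOn)]

theorem sum_ballotWords_succ_succ {M : Type*} [AddCommMonoid M] {N c : ℕ} (hc : c ≤ N)
    (f : List Step → M) :
    ∑ w ∈ ballotWords (N + 1) (c + 1), f w =
      ∑ w ∈ ballotWords N (c + 1), f (Step.d :: w) + ∑ w ∈ ballotWords N c, f (Step.h :: w) +
        ∑ w ∈ ballotWords (N + 1) c, f (Step.u :: w) := by
  rw [ballotWords, if_pos hc, sum_union, sum_union, sum_image List.cons_injective.injOn,
    sum_image List.cons_injective.injOn, sum_image List.cons_injective.injOn]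
  all_goals
    rw [disjoint_left]
    grind

variable {R : Type*} [CommSemiring R]

/-- The generating function of the words `u ^ a * w` with `w` in `ballotWords N c`, by segment
weights `t` and a factor `y` for each `h`. -/
def ballotSum (t : ℕ → R) (y : R) (a N c : ℕ) : R :=
  ∑ w ∈ ballotWords N c, y ^ w.count Step.h * segmentWeight t (List.replicate a Step.u ++ w)

theorem sum_ballotWords_replicate_append_cons (t : ℕ → R) (y : R) {s : Step} (hs : s ≠ Step.u)
    (a N c : ℕ) :
    ∑ w ∈ ballotWords N c, y ^ (s :: w).count Step.h *
        segmentWeight t (List.replicate a Step.u ++ s :: w) =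
      Function.update t 0 1 a * (y ^ [s].count Step.h * ballotSum t y 0 N c) := by
  rw [ballotSum, mul_sum, mul_sum]
  refine sum_congr rfl fun w _ ↦ ?_
  rw [segmentWeight_replicate_append t hs, ← List.singleton_append, List.count_append, pow_add,
    List.replicate_zero, List.nil_append]
  ring

theorem ballotSum_succ_zero (t : ℕ → R) (y : R) (a N : ℕ) :
    ballotSum t y a (N + 1) 0 = Function.update t 0 1 a * ballotSum t y 0 N 0 := by
  rw [ballotSum, sum_ballotWords_succ_zero, sum_ballotWords_replicate_append_cons t y (by decide)]
  simp

theorem ballotSum_succ_succ (t : ℕ → R) (y : R) (a : ℕ) {N c : ℕ} (hc : c ≤ N) :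
    ballotSum t y a (N + 1) (c + 1) =
      Function.update t 0 1 a * (ballotSum t y 0 N (c + 1) + y * ballotSum t y 0 N c) +
        ballotSum t y (a + 1) (N + 1) c := by
  rw [ballotSum, sum_ballotWords_succ_succ hc,
    sum_ballotWords_replicate_append_cons t y (by decide),
    sum_ballotWords_replicate_append_cons t y (by decide), ← mul_add]
  simp [ballotSum, List.replicate_succ']

theorem ballotSum_succ (t : ℕ → R) (y : R) (a : ℕ) {N c : ℕ} (hc : c ≤ N + 1) :
    ballotSum t y a (N + 1) c = ∑ p ∈ antidiagonal c, Function.update t 0 1 (a + p.1) *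
      coeff p.2 ((1 + C y * X : R⟦X⟧) * PowerSeries.mk (ballotSum t y 0 N)) := by
  induction c generalizing a with
  | zero => simp [ballotSum_succ_zero]
  | succ c ih =>
    rw [ballotSum_succ_succ t y a (by omega), ih (a + 1) (by omega),
      Finset.Nat.antidiagonal_succ, sum_cons]
    simp [add_mul, mul_assoc, add_assoc, add_comm 1, coeff_C_mul, coeff_succ_X_mul]

theorem ballotSum_zero_succ (t : ℕ → R) (y : R) {N c : ℕ} (hc : c ≤ N + 1) :
    ballotSum t y 0 (N + 1) c =
      coeff c (segmentSeries t * (1 + C y * X) * PowerSeries.mk (ballotSum t y 0 N)) := by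
  rw [ballotSum_succ t y 0 hc, mul_assoc, coeff_mul]
  simp only [segmentSeries, coeff_mk, zero_add]

theorem add_one_mul_ballotSum {K : Type*} [CommRing K] [IsDomain K] [CharZero K] (t : ℕ → K) (y : K)
    {N c : ℕ} (hc : c ≤ N + 1) :
    ((N : K) + 1) * ballotSum t y 0 N c =
      (N + 1 - c) * coeff c ((segmentSeries t * (1 + C y * X)) ^ (N + 1)) := by
  refine ballot_formula _ (ballotSum t y 0) ?_ (fun N ↦ ?_) (fun N c hc ↦ ?_) N c hc
  · simp [ballotSum, ballotWords, segmentWeight, uRuns, runs, segmentSeries]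
  · rw [ballotSum, ballotWords_eq_empty N.lt_succ_self, sum_empty]
  · exact ballotSum_zero_succ t y hc

theorem coe_filter_ballotWords (m j : ℕ) :
    (((ballotWords (m + j) (m + j)).filter (·.count Step.h = j) : Finset (List Step)) :
      Set (List Step)) = pathSet m j := by
  ext w
  simp only [coe_filter, mem_ballotWords, pathSet, Set.mem_ofPred_eq]
  constructor
  · rintro ⟨⟨hw, hd, hu⟩, hh⟩
    exact ⟨by omega, by omega, hh, (isNonneg_iff_isBallot (by omega)).2 hw⟩
  · rintro ⟨hu, hd, hh, hw⟩
    exact ⟨⟨(isNonneg_iff_isBallot (by omega)).1 hw, by omega, by omega⟩, hh⟩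

theorem coeff_ballotSum_C_X (t : ℕ → R) (N c j : ℕ) :
    (ballotSum (Polynomial.C ∘ t) Polynomial.X 0 N c).coeff j =
      ∑ w ∈ ballotWords N c with w.count Step.h = j, segmentWeight t w := by
  simp [ballotSum, ← map_segmentWeight, Polynomial.coeff_X_pow, sum_filter, eq_comm]

theorem finsum_mem_pathSet (t : ℕ → R) (m j : ℕ) :
    ∑ᶠ w ∈ pathSet m j, ∏ i ∈ Icc 1 m, t i ^ alpha i w =
      (ballotSum (Polynomial.C ∘ t) Polynomial.X 0 (m + j) (m + j)).coeff j := by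
  rw [coeff_ballotSum_C_X, ← finsum_mem_coe_finset, coe_filter_ballotWords]
  refine finsum_mem_congr rfl fun w hw ↦ ?_
  rw [← hw.1, prod_pow_alpha]

theorem add_one_mul_finsum_mem_pathSet (t : ℕ → ℚ) (m j : ℕ) :
    ((m + j + 1 : ℕ) : ℚ) * ∑ᶠ w ∈ pathSet m j, ∏ i ∈ Icc 1 m, t i ^ alpha i w =
      (m + j + 1).choose j * potential (m + j + 1) m t := by
  have h := add_one_mul_ballotSum (Polynomial.C ∘ t) Polynomial.X (m + j).le_succ
  rw [add_sub_cancel_left, one_mul, ← map_segmentSeries, ← Nat.cast_succ] at h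
  rw [finsum_mem_pathSet, ← Polynomial.coeff_natCast_mul, h,
    coeff_coeff_map_C_mul_one_add_C_X_mul_X_pow, coeff_segmentSeries_pow]

end BallotWords

theorem stmt1 (k j m : ℕ) (hm : 1 ≤ m) (t : ℕ → ℚ) :
    (∑ᶠ w ∈ pathSet m j, ∏ i ∈ Finset.Icc 1 m, t i ^ alpha i w) =
      (1 : ℚ) / (m + 1) * Nat.choose (m + j) m *
        ∑ r ∈ Finset.range (m + 1), (Nat.choose (m + j + 1) r : ℚ) * bellNorm m r t := by
  have h := add_one_mul_finsum_mem_pathSet t m j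
  have hchoose : (m + j + 1) * (m + j).choose m = (m + j + 1).choose j * (m + 1) := by
    rw [Nat.add_one_mul_choose_eq, Nat.choose_symm_of_eq_add (by omega : m + j + 1 = m + 1 + j)]
  qify at hchoose
  rw [← potential]
  apply mul_left_cancel₀ (Nat.cast_ne_zero.2 (m + j).succ_ne_zero : ((m + j + 1 : ℕ) : ℚ) ≠ 0)
  rw [h]
  field_simp
  push_cast
  linear_combination -potential (m + j + 1) m t * hchoose
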